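/- Let F be a finite index set, and for each k ∈ {1,…,N} and f ∈ F let T_k^{i→f} be an operator on H_k; set T^{i→f} = Σ_{k=1}^N (extension of T_k^{i→f} to H). Let |t⟩ be a unit vector in H with single-site reduced density matrices ρ_k and entropies s_k, and for each k let P_k = max over density matrices σ on H_k of Σ_{f∈F} Var_σ(T_k^{i→f}). Then Σ_{f∈F} Var_{|t⟩}(T^{i→f}) ≤ ((1/N)·Σ_{k=1}^N P_k) · (N + 2N²·√((1/N)·Σ_{k=1}^N s_k)). (This is the paper's bound p_⊥ ≤ Avg_k(p_{⊥,k}^max)·(N + 2N²√(Avg_k s_k)) on the order-α² orthogonal scattering probability from an N-particle pure target state.) -/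

import Mathlib

open scoped BigOperators Kronecker Matrix ComplexOrder

noncomputable section
namespace Paper

/-- A density matrix: a positive semidefinite operator of trace one. -/
def IsDensityMatrix {n : Type*} [Fintype n] (ρ : Matrix n n ℂ) : Prop :=
  ρ.PosSemidef ∧ ρ.trace = 1

/-- The operator norm `‖A‖_∞` (largest singular value) of a matrix,
as the operator norm of the induced map on Euclidean space. -/
noncomputable def opNorm {n : Type*} [Fintype n] [DecidableEq n] (A : Matrix n n ℂ) : ℝ :=
  ‖LinearMap.toContinuousLinearMap (Matrix.toEuclideanLin A)‖

/-- Von Neumann entropy `−∑ λ ln λ` over the eigenvalues; since `Real.log 0 = 0`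
in Mathlib, the convention `0 · ln 0 = 0` is automatic. -/
noncomputable def entropy {n : Type*} [Fintype n] [DecidableEq n] (σ : Matrix n n ℂ) : ℝ :=
  if h : σ.IsHermitian then -∑ i, h.eigenvalues i * Real.log (h.eigenvalues i) else 0

/-- The variance `Var_ρ(A) = Tr[ρ A† A] − |Tr[ρ A]|²`. -/
noncomputable def variance {n : Type*} [Fintype n] (ρ A : Matrix n n ℂ) : ℝ :=
  (ρ * (Aᴴ * A)).trace.re - ‖(ρ * A).trace‖ ^ 2

/-- The trace norm `‖A‖₁ = Tr √(A†A)`: the sum of the singular values. -/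
noncomputable def traceNorm {n : Type*} [Fintype n] [DecidableEq n] (A : Matrix n n ℂ) : ℝ :=
  ∑ i, Real.sqrt ((Matrix.posSemidef_conjTranspose_mul_self A).1.eigenvalues i)

/-- The pure state `|v⟩⟨v|` associated with a vector `v`. -/
def pureState {n : Type*} (v : n → ℂ) : Matrix n n ℂ :=
  Matrix.of fun x y => v x * (starRingEnd ℂ) (v y)

/-- The expectation value `⟨v|M|v⟩`. -/
noncomputable def expval {n : Type*} [Fintype n] (M : Matrix n n ℂ) (v : n → ℂ) : ℂ :=
  ∑ x, ∑ y, (starRingEnd ℂ) (v x) * M x y * v y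

variable {N : ℕ} {d : Fin N → Type*} [∀ k, Fintype (d k)] [∀ k, DecidableEq (d k)]

/-- Extension of a local operator on the `k`-th factor to the `N`-fold tensor
product `H = H_1 ⊗ ⋯ ⊗ H_N`, tensoring with the identity on every other factor.
(The tensor product is realized with index set `∀ j, d j`.) -/
def extendAt (k : Fin N) (A : Matrix (d k) (d k) ℂ) : Matrix (∀ j, d j) (∀ j, d j) ℂ :=
  Matrix.of fun x y => if ∀ j, j ≠ k → x j = y j then A (x k) (y k) else 0

/-- Reduced density matrix on the `k`-th factor: partial trace over all other factors. -/
noncomputable def reduce (k : Fin N) (ρ : Matrix (∀ j, d j) (∀ j, d j) ℂ) :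
    Matrix (d k) (d k) ℂ :=
  Matrix.of fun a b => ∑ x : ∀ j, d j, if x k = a then ρ x (Function.update x k b) else 0

/-! Centre each `T_k` at its mean values in a state maximising its total variance: first-order
optimality of the maximiser bounds the second moments of the centred operators by `P_k` in *every*
state, while the variances and covariances in `t` are unchanged. The variance of the sum is the
squared norm of a sum of deviation vectors, one for each site, of squared norms at most `P_k`.

For the covariance of two sites `k ≠ l`, let `Q` project site `l` onto a top eigenvector of `ρ_l`.
It commutes with the operators at `k` and compresses those at `l` to scalars, so `Q t` alone
contributes no covariance, and what remains is at most `√P_k √P_l (1 + √2) ‖t - Q t‖`. Finally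
`‖t - Q t‖² = 1 - λ_max`, and the entropy controls this defect through `1 - ∑ λ² ≤ s_l`. -/

section InnerProduct

open WithLp

variable {𝕜 E : Type*} [RCLike 𝕜] [NormedAddCommGroup E] [InnerProductSpace 𝕜 E]

/-- The expectation value of `A` in the state proportional to `t`; it is `0` for `t = 0`. -/
def mean (A : E →L[𝕜] E) (t : E) : 𝕜 := inner 𝕜 t (A t) / (‖t‖ : 𝕜) ^ 2

/-- The component of `A t` orthogonal to `t`; for a unit vector `t` its squared norm is the variance
of `A` in the state `t`. -/
def deviation (A : E →L[𝕜] E) (t : E) : E := A t - mean A t • t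

theorem mean_smul_self (A : E →L[𝕜] E) (t : E) : mean A t • t = (𝕜 ∙ t).starProjection (A t) := by
  rw [Submodule.starProjection_singleton, mean, RCLike.ofReal_pow]

theorem inner_self_deviation (A : E →L[𝕜] E) (t : E) : inner 𝕜 t (deviation A t) = 0 := by
  rw [deviation, mean_smul_self]
  exact (𝕜 ∙ t).sub_starProjection_mem_orthogonal (A t) t (Submodule.mem_span_singleton_self t)

theorem inner_deviation_self (A : E →L[𝕜] E) (t : E) : inner 𝕜 (deviation A t) t = 0 :=
  inner_eq_zero_symm.1 (inner_self_deviation A t)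

theorem norm_deviation_sq_add (A : E →L[𝕜] E) (t : E) :
    ‖deviation A t‖ ^ 2 + ‖mean A t‖ ^ 2 * ‖t‖ ^ 2 = ‖A t‖ ^ 2 := by
  have hpyth := norm_add_sq_eq_norm_sq_add_norm_sq_of_inner_eq_zero (𝕜 := 𝕜)
    (deviation A t) (mean A t • t) (by rw [inner_smul_right, inner_deviation_self, mul_zero])
  rw [deviation, sub_add_cancel, norm_smul] at hpyth
  rw [deviation]
  linarith

theorem deviation_sub_smul_one (A : E →L[𝕜] E) (c : 𝕜) (t : E) :
    deviation (A - c • 1) t = deviation A t := by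
  rcases eq_or_ne t 0 with rfl | ht
  · simp [deviation]
  · have ht' : (‖t‖ : 𝕜) ≠ 0 := by simpa using ht
    have hmean : mean (A - c • 1) t = mean A t - c := by
      simp [mean, inner_sub_right, inner_smul_right, inner_self_eq_norm_sq_to_K, sub_div, ht']
    simp [deviation, hmean, sub_smul]

theorem deviation_sum {κ : Type*} [Fintype κ] (A : κ → E →L[𝕜] E) (t : E) :
    deviation (∑ k, A k) t = ∑ k, deviation (A k) t := by
  simp [deviation, mean, inner_sum, Finset.sum_div, Finset.sum_smul]

section Complete

variable [CompleteSpace E] {Q : E →L[𝕜] E}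

theorem inner_left_isStarProjection (hQ : IsStarProjection Q) (v w : E) :
    inner 𝕜 (Q v) w = inner 𝕜 v (Q w) :=
  ContinuousLinearMap.isSelfAdjoint_iff_isSymmetric.1 hQ.isSelfAdjoint v w

theorem norm_sub_apply_sq_of_isStarProjection (hQ : IsStarProjection Q) (t : E) :
    ‖t - Q t‖ ^ 2 = ‖t‖ ^ 2 - RCLike.re (inner 𝕜 t (Q t)) := by
  have hQQ : Q (Q t) = Q t := DFunLike.congr_fun hQ.isIdempotentElem.eq t
  have hQt : ‖Q t‖ ^ 2 = RCLike.re (inner 𝕜 t (Q t)) := by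
    rw [← inner_self_eq_norm_sq (𝕜 := 𝕜), inner_left_isStarProjection hQ, hQQ]
  rw [norm_sub_sq (𝕜 := 𝕜), hQt]
  ring

/-- Every term on the right carries a factor `t - Q t`: the part of `X t` coming from `Q t` is
centred in the range of `Q`, where `D` acts as a scalar. -/
theorem inner_deviation_deviation (hQ : IsStarProjection Q) {X D : E →L[𝕜] E}
    (hQX : Commute Q X) {a : 𝕜} (hQD : Q * D * Q = a • Q) (t : E) :
    inner 𝕜 (deviation X t) (deviation D t) =
      inner 𝕜 (deviation X (Q t)) (D (t - Q t)) +
        inner 𝕜 (X (t - Q t) - mean X (Q t) • (t - Q t)) (deviation D t) := by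
  have hQQ : Q (Q t) = Q t := DFunLike.congr_fun hQ.isIdempotentElem.eq t
  have hdecomp : deviation X t = deviation X (Q t) +
      (X (t - Q t) - mean X (Q t) • (t - Q t)) + (mean X (Q t) - mean X t) • t := by
    simp only [deviation, map_sub, smul_sub, sub_smul]
    abel
  have hrange : Q (deviation X (Q t)) = deviation X (Q t) := by
    have hcomm : Q (X (Q t)) = X (Q (Q t)) := DFunLike.congr_fun hQX.eq (Q t)
    rw [deviation, map_sub, map_smul, hcomm, hQQ]
  have hscalar : Q (deviation D t - D (t - Q t)) = (a - mean D t) • Q t := by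
    have hcompress : Q (D (Q t)) = a • Q t := DFunLike.congr_fun hQD t
    simp only [deviation, map_sub, map_smul, hcompress, sub_smul]
    abel
  have hinside : inner 𝕜 (deviation X (Q t)) (deviation D t) =
      inner 𝕜 (deviation X (Q t)) (D (t - Q t)) := by
    rw [← sub_eq_zero, ← inner_sub_right, ← hrange, inner_left_isStarProjection hQ, hscalar,
      inner_smul_right, inner_deviation_self, mul_zero]
  conv_lhs => rw [hdecomp]
  rw [inner_add_left, inner_add_left, inner_smul_left, inner_self_deviation, mul_zero, add_zero,
    hinside]

end Complete

variable {F : Type*}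

/-- The deviations of a finite family of operators, collected into one vector of the Hilbert sum of
copies of `E`, so that variances and covariances summed over the family are its squared norms and
inner products. -/
def totalDeviation (A : F → E →L[𝕜] E) (t : E) : PiLp 2 fun _ : F => E :=
  toLp 2 fun f => deviation (A f) t

theorem totalDeviation_sub_smul_one (A : F → E →L[𝕜] E) (c : F → 𝕜) (t : E) :
    totalDeviation (fun f => A f - c f • 1) t = totalDeviation A t := by
  simp only [totalDeviation, deviation_sub_smul_one]

theorem totalDeviation_sum {κ : Type*} [Fintype κ] (A : κ → F → E →L[𝕜] E) (t : E) :
    totalDeviation (fun f => ∑ k, A k f) t = ∑ k, totalDeviation (A k) t := by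
  simp only [totalDeviation, deviation_sum, ← toLp_sum]
  congr 1
  ext f
  rw [Finset.sum_apply]

variable [Fintype F]

theorem norm_totalDeviation_sq (A : F → E →L[𝕜] E) (t : E) :
    ‖totalDeviation A t‖ ^ 2 = ∑ f, ‖deviation (A f) t‖ ^ 2 :=
  PiLp.norm_sq_eq_of_L2 _ _

/-- The family `A` has total second moment at most `P` in every state, that is,
`∑ f, (A f)† * A f ≤ P`. -/
def SecondMomentLE (A : F → E →L[𝕜] E) (P : ℝ) : Prop :=
  ∀ w, ∑ f, ‖A f w‖ ^ 2 ≤ P * ‖w‖ ^ 2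

theorem SecondMomentLE.of_forall_norm_eq_one {A : F → E →L[𝕜] E} {P : ℝ}
    (hA : ∀ w, ‖w‖ = 1 → ∑ f, ‖A f w‖ ^ 2 ≤ P) : SecondMomentLE A P := by
  intro w
  rcases eq_or_ne w 0 with rfl | hw
  · simp
  · have hw' : ‖w‖ ≠ 0 := norm_ne_zero_iff.2 hw
    have hunit := hA ((‖w‖ : 𝕜)⁻¹ • w) (by simp [norm_smul, hw'])
    simp only [map_smul, norm_smul, norm_inv, RCLike.norm_coe_norm, mul_pow, inv_pow,
      ← Finset.mul_sum] at hunit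
    rwa [inv_mul_le_iff₀ (by positivity), mul_comm] at hunit

theorem SecondMomentLE.norm_toLp_le {A : F → E →L[𝕜] E} {P : ℝ} (hA : SecondMomentLE A P) (w : E) :
    ‖toLp 2 fun f => A f w‖ ≤ √P * ‖w‖ := by
  rw [← Real.sqrt_sq (norm_nonneg w), ← Real.sqrt_mul' _ (sq_nonneg _)]
  refine Real.le_sqrt_of_sq_le ?_
  rw [PiLp.norm_sq_eq_of_L2]
  exact hA w

theorem SecondMomentLE.nonneg {A : F → E →L[𝕜] E} {P : ℝ} (hA : SecondMomentLE A P) {t : E}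
    (ht : t ≠ 0) : 0 ≤ P := by
  have hmoment := (Finset.sum_nonneg fun f _ => sq_nonneg ‖A f t‖).trans (hA t)
  exact nonneg_of_mul_nonneg_left hmoment (by positivity)

theorem SecondMomentLE.norm_totalDeviation_sq_add_le {A : F → E →L[𝕜] E} {P : ℝ}
    (hA : SecondMomentLE A P) (hP : 0 ≤ P) {t : E} (ht : ‖t‖ ≤ 1) :
    ‖totalDeviation A t‖ ^ 2 + ∑ f, ‖mean (A f) t‖ ^ 2 ≤ P := by
  rcases eq_or_ne t 0 with rfl | h0
  · simpa [norm_totalDeviation_sq, deviation, mean] using hP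
  · have ht0 : 0 < ‖t‖ ^ 2 := by positivity
    have hpyth : ‖totalDeviation A t‖ ^ 2 + (∑ f, ‖mean (A f) t‖ ^ 2) * ‖t‖ ^ 2 ≤ P * ‖t‖ ^ 2 := by
      simpa only [norm_totalDeviation_sq, Finset.sum_mul, ← Finset.sum_add_distrib,
        norm_deviation_sq_add] using hA t
    have hshrink : ‖totalDeviation A t‖ ^ 2 * ‖t‖ ^ 2 ≤ ‖totalDeviation A t‖ ^ 2 :=
      mul_le_of_le_one_right (sq_nonneg _) (pow_le_one₀ (norm_nonneg t) ht)
    refine le_of_mul_le_mul_right ?_ ht0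
    linarith

theorem SecondMomentLE.norm_totalDeviation_le {A : F → E →L[𝕜] E} {P : ℝ}
    (hA : SecondMomentLE A P) (hP : 0 ≤ P) {t : E} (ht : ‖t‖ ≤ 1) :
    ‖totalDeviation A t‖ ≤ √P :=
  Real.le_sqrt_of_sq_le <| (le_add_of_nonneg_right <| Finset.sum_nonneg fun f _ =>
    sq_nonneg ‖mean (A f) t‖).trans (hA.norm_totalDeviation_sq_add_le hP ht)

theorem SecondMomentLE.norm_totalDeviation_add_le {A : F → E →L[𝕜] E} {P : ℝ}
    (hA : SecondMomentLE A P) (hP : 0 ≤ P) {t : E} (ht : ‖t‖ ≤ 1) :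
    ‖totalDeviation A t‖ + √(∑ f, ‖mean (A f) t‖ ^ 2) ≤ √2 * √P := by
  rw [← Real.sqrt_mul zero_le_two]
  refine Real.le_sqrt_of_sq_le (add_sq_le.trans ?_)
  rw [Real.sq_sqrt (Finset.sum_nonneg fun f _ => sq_nonneg _)]
  linarith [hA.norm_totalDeviation_sq_add_le hP ht]

theorem norm_toLp_smul (c : F → 𝕜) (v : E) :
    ‖toLp 2 fun f => c f • v‖ = √(∑ f, ‖c f‖ ^ 2) * ‖v‖ := by
  simp only [PiLp.norm_eq_of_L2, norm_smul, mul_pow, ← Finset.sum_mul]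
  rw [Real.sqrt_mul' _ (sq_nonneg _), Real.sqrt_sq (norm_nonneg v)]

theorem norm_inner_totalDeviation_le [CompleteSpace E] {t : E} (ht : ‖t‖ = 1)
    {X D : F → E →L[𝕜] E} {P R : ℝ} (hX : SecondMomentLE X P) (hD : SecondMomentLE D R)
    {Q : E →L[𝕜] E} (hQ : IsStarProjection Q) (hQX : ∀ f, Commute Q (X f))
    (hQD : ∀ f, ∃ a : 𝕜, Q * D f * Q = a • Q) :
    ‖inner 𝕜 (totalDeviation X t) (totalDeviation D t)‖ ≤
      √P * √R * min 1 ((1 + √2) * ‖t - Q t‖) := by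
  have ht0 : t ≠ 0 := norm_ne_zero_iff.1 (ht.trans_ne one_ne_zero)
  have hP := hX.nonneg ht0
  have hR := hD.nonneg ht0
  have hDt := hD.norm_totalDeviation_le hR ht.le
  rw [mul_min_of_nonneg _ _ (by positivity), le_min_iff, mul_one]
  constructor
  · exact (norm_inner_le_norm _ _).trans
      (mul_le_mul (hX.norm_totalDeviation_le hP ht.le) hDt (norm_nonneg _) (Real.sqrt_nonneg _))
  set u := Q t
  set v := t - u
  set m : F → 𝕜 := fun f => mean (X f) u
  have hu : ‖u‖ ≤ 1 := by
    simpa [ht] using Q.le_of_opNorm_le hQ.norm_le t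
  have hsplit : inner 𝕜 (totalDeviation X t) (totalDeviation D t) =
      inner 𝕜 (totalDeviation X u) (toLp 2 fun f => D f v) +
        inner 𝕜 (toLp 2 (fun f => X f v) - toLp 2 fun f => m f • v) (totalDeviation D t) := by
    simp only [totalDeviation, PiLp.inner_apply, ← Finset.sum_add_distrib, PiLp.sub_apply]
    refine Finset.sum_congr rfl fun f _ => ?_
    obtain ⟨a, ha⟩ := hQD f
    exact inner_deviation_deviation hQ (hQX f) ha t
  calc ‖inner 𝕜 (totalDeviation X t) (totalDeviation D t)‖
      ≤ ‖totalDeviation X u‖ * (√R * ‖v‖) +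
          (√P * ‖v‖ + √(∑ f, ‖m f‖ ^ 2) * ‖v‖) * √R := by
        rw [hsplit]
        refine (norm_add_le _ _).trans (add_le_add ?_ ?_)
        · exact (norm_inner_le_norm _ _).trans (by gcongr; exact hD.norm_toLp_le v)
        · refine (norm_inner_le_norm _ _).trans ?_
          gcongr
          refine (norm_sub_le _ _).trans ?_
          rw [norm_toLp_smul]
          gcongr
          exact hX.norm_toLp_le v
    _ = √R * ‖v‖ * (√P + (‖totalDeviation X u‖ + √(∑ f, ‖m f‖ ^ 2))) := by ring
    _ ≤ √R * ‖v‖ * (√P + √2 * √P) := by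
        gcongr
        exact hX.norm_totalDeviation_add_le hP hu
    _ = √P * √R * ((1 + √2) * ‖v‖) := by ring

end InnerProduct

section Gram

variable {𝕜 G κ : Type*} [RCLike 𝕜] [NormedAddCommGroup G] [InnerProductSpace 𝕜 G] [Fintype κ]

theorem norm_sum_sq_le_of_norm_inner_le {y : κ → G} {P r : κ → ℝ} (hr : ∀ k, 0 ≤ r k)
    (hdiag : ∀ k, ‖y k‖ ^ 2 ≤ P k)
    (hoff : Pairwise fun k l => ‖inner 𝕜 (y k) (y l)‖ ≤ P k * r l + P l * r k) :
    ‖∑ k, y k‖ ^ 2 ≤ (∑ k, P k) * (1 + 2 * ∑ k, r k) := by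
  classical
  have hP : ∀ k, 0 ≤ P k := fun k => (sq_nonneg _).trans (hdiag k)
  have hentry : ∀ k l, RCLike.re (inner 𝕜 (y k) (y l)) ≤
      (if k = l then P k else 0) + (P k * r l + P l * r k) := by
    intro k l
    rcases eq_or_ne k l with rfl | hkl
    · rw [inner_self_eq_norm_sq, if_pos rfl]
      linarith [hdiag k, mul_nonneg (hP k) (hr k)]
    · rw [if_neg hkl, zero_add]
      exact (RCLike.re_le_norm _).trans (hoff hkl)
  calc ‖∑ k, y k‖ ^ 2 = ∑ k, ∑ l, RCLike.re (inner 𝕜 (y k) (y l)) := by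
        simp only [← inner_self_eq_norm_sq (𝕜 := 𝕜), sum_inner, inner_sum, map_sum]
        exact Finset.sum_comm
    _ ≤ ∑ k, ∑ l, ((if k = l then P k else 0) + (P k * r l + P l * r k)) :=
        Finset.sum_le_sum fun k _ => Finset.sum_le_sum fun l _ => hentry k l
    _ = (∑ k, P k) * (1 + 2 * ∑ k, r k) := by
        simp only [Finset.sum_add_distrib, Finset.sum_ite_eq, Finset.mem_univ, if_true,
          ← Finset.mul_sum, ← Finset.sum_mul]
        ring

end Gram

section DensityMatrix

open Filter Topology WithLp

theorem pureState_eq_vecMulVec {n : Type*} (v : n → ℂ) :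
    pureState v = Matrix.vecMulVec v (star v) := rfl

theorem posSemidef_pureState {n : Type*} [Finite n] (v : n → ℂ) : (pureState v).PosSemidef :=
  Matrix.posSemidef_vecMulVec_self_star v

variable {n : Type*} [Fintype n]

theorem isDensityMatrix_pureState {v : n → ℂ} (hv : ‖toLp 2 v‖ = 1) :
    IsDensityMatrix (pureState v) := by
  refine ⟨posSemidef_pureState v, ?_⟩
  rw [pureState_eq_vecMulVec, Matrix.trace_vecMulVec,
    ← EuclideanSpace.inner_toLp_toLp, inner_self_eq_norm_sq_to_K, hv]
  simp

theorem pureState_mul_mul_pureState (v : n → ℂ) (A : Matrix n n ℂ) :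
    pureState v * A * pureState v = (pureState v * A).trace • pureState v := by
  rw [pureState_eq_vecMulVec, Matrix.vecMulVec_mul,
    Matrix.vecMulVec_mul_vecMulVec, Matrix.trace_vecMulVec, Matrix.vecMulVec_smul,
    dotProduct_comm]

theorem isStarProjection_pureState {v : n → ℂ} (hv : ‖toLp 2 v‖ = 1) :
    IsStarProjection (pureState v) where
  isIdempotentElem := by
    classical
    have hcompress := pureState_mul_mul_pureState v 1
    rwa [mul_one, (isDensityMatrix_pureState hv).2, one_smul] at hcompress
  isSelfAdjoint := (posSemidef_pureState v).isHermitian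

theorem convex_setOf_isDensityMatrix : Convex ℝ {ρ : Matrix n n ℂ | IsDensityMatrix ρ} := by
  intro σ hσ τ hτ a b ha hb hab
  refine ⟨(hσ.1.smul ha).add (hτ.1.smul hb), ?_⟩
  rw [Matrix.trace_add, Matrix.trace_smul, Matrix.trace_smul, hσ.2, hτ.2, ← add_smul, hab, one_smul]

/-- The second moment `Tr[ρ A† A]` of the operator `A` in the state `ρ`. -/
def secondMoment (ρ A : Matrix n n ℂ) : ℝ := (ρ * (Aᴴ * A)).trace.re

theorem variance_eq_secondMoment_sub (ρ A : Matrix n n ℂ) :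
    variance ρ A = secondMoment ρ A - ‖(ρ * A).trace‖ ^ 2 := rfl

theorem secondMoment_sub_smul_one [DecidableEq n] {ρ : Matrix n n ℂ} (hρ : IsDensityMatrix ρ)
    (A : Matrix n n ℂ) (c : ℂ) :
    secondMoment ρ (A - c • 1) = variance ρ A + ‖(ρ * A).trace - c‖ ^ 2 := by
  have hstar : (ρ * Aᴴ).trace = star (ρ * A).trace := by
    rw [← Matrix.trace_conjTranspose, Matrix.conjTranspose_mul, hρ.1.isHermitian.eq,
      Matrix.trace_mul_comm]
  have hexpand : ρ * ((A - c • 1)ᴴ * (A - c • 1)) =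
      ρ * (Aᴴ * A) - c • (ρ * Aᴴ) - star c • (ρ * A) + (c * star c) • ρ := by
    simp [sub_mul, mul_sub, smul_smul, smul_sub]
    abel
  rw [variance_eq_secondMoment_sub, secondMoment, secondMoment, hexpand]
  simp only [Matrix.trace_add, Matrix.trace_sub, Matrix.trace_smul, hstar, hρ.2, smul_eq_mul,
    Complex.sq_norm, Complex.normSq_apply, Complex.add_re, Complex.sub_re, Complex.sub_im,
    Complex.mul_re, Complex.mul_im, Complex.star_def, Complex.conj_re, Complex.conj_im,
    Complex.one_re, Complex.one_im]
  ring

theorem variance_convexCombination (σ τ A : Matrix n n ℂ) {a b : ℝ} (hab : a + b = 1) :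
    variance (a • σ + b • τ) A = a * variance σ A + b * variance τ A +
      a * b * ‖(τ * A).trace - (σ * A).trace‖ ^ 2 := by
  obtain rfl : a = 1 - b := eq_sub_of_add_eq hab
  simp only [variance, add_mul, Matrix.smul_mul, Matrix.trace_add, Matrix.trace_smul,
    Complex.sq_norm, Complex.normSq_apply, Complex.add_re, Complex.add_im, Complex.smul_re,
    Complex.smul_im, Complex.sub_re, Complex.sub_im, smul_eq_mul]
  ring

/-- First-order optimality of `σ` along the segment from `σ` to `τ`. -/
theorem sum_secondMoment_sub_le_of_isMaxOn [DecidableEq n] {F : Type*} [Fintype F]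
    {T : F → Matrix n n ℂ} {σ τ : Matrix n n ℂ}
    (hmax : IsMaxOn (fun ρ => ∑ f, variance ρ (T f)) {ρ | IsDensityMatrix ρ} σ)
    (hσ : IsDensityMatrix σ) (hτ : IsDensityMatrix τ) :
    ∑ f, secondMoment τ (T f - (σ * T f).trace • 1) ≤ ∑ f, variance σ (T f) := by
  set S := ∑ f, ‖(τ * T f).trace - (σ * T f).trace‖ ^ 2
  have hsegment : ∀ r ∈ Set.Ioo (0 : ℝ) 1,
      ∑ f, variance τ (T f) + (1 - r) * S ≤ ∑ f, variance σ (T f) := by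
    rintro r ⟨hr0, hr1⟩
    have hle := hmax (convex_setOf_isDensityMatrix hσ hτ (sub_nonneg.2 hr1.le) hr0.le
      (sub_add_cancel 1 r))
    simp only [Set.mem_ofPred_eq, variance_convexCombination _ _ _ (sub_add_cancel 1 r),
      Finset.sum_add_distrib, ← Finset.mul_sum] at hle
    refine le_of_mul_le_mul_left ?_ hr0
    linarith
  have hlim : Tendsto (fun r => ∑ f, variance τ (T f) + (1 - r) * S) (𝓝[>] 0)
      (𝓝 (∑ f, variance τ (T f) + (1 - 0) * S)) :=
    Continuous.tendsto (by fun_prop) 0 |>.mono_left nhdsWithin_le_nhds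
  simp only [secondMoment_sub_smul_one hτ, Finset.sum_add_distrib]
  have hle := le_of_tendsto hlim
    (Filter.eventually_of_mem (Ioo_mem_nhdsGT zero_lt_one) hsegment)
  rwa [sub_zero, one_mul] at hle

variable [DecidableEq n]

theorem trace_pureState_mul (v : n → ℂ) (M : Matrix n n ℂ) :
    (pureState v * M).trace =
      inner ℂ (toLp 2 v) (Matrix.toEuclideanCLM (𝕜 := ℂ) M (toLp 2 v)) := by
  rw [pureState_eq_vecMulVec, Matrix.vecMulVec_mul,
    Matrix.trace_vecMulVec, Matrix.toEuclideanCLM_toLp, EuclideanSpace.inner_toLp_toLp,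
    dotProduct_comm, ← Matrix.dotProduct_mulVec, dotProduct_comm]

theorem secondMoment_pureState (v : n → ℂ) (A : Matrix n n ℂ) :
    secondMoment (pureState v) A = ‖Matrix.toEuclideanCLM (𝕜 := ℂ) A (toLp 2 v)‖ ^ 2 := by
  rw [secondMoment, trace_pureState_mul, map_mul, ← Matrix.star_eq_conjTranspose, map_star,
    mul_apply_eq_comp, ContinuousLinearMap.star_eq_adjoint,
    ContinuousLinearMap.adjoint_inner_right]
  exact inner_self_eq_norm_sq (𝕜 := ℂ) _

theorem variance_pureState {v : n → ℂ} (hv : ‖toLp 2 v‖ = 1) (A : Matrix n n ℂ) :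
    variance (pureState v) A =
      ‖deviation (Matrix.toEuclideanCLM (𝕜 := ℂ) A) (toLp 2 v)‖ ^ 2 := by
  rw [variance_eq_secondMoment_sub, secondMoment_pureState, trace_pureState_mul,
    ← norm_deviation_sq_add, mean, hv]
  simp

end DensityMatrix

section Entropy

open WithLp

theorem sum_sq_le_sq_add_one_sub_sq {ι : Type*} [Fintype ι] {l : ι → ℝ} (hl : ∀ i, 0 ≤ l i)
    (hsum : ∑ i, l i = 1) (j : ι) : ∑ i, l i ^ 2 ≤ l j ^ 2 + (1 - l j) ^ 2 := by
  classical
  have hrest : ∑ i ∈ Finset.univ.erase j, l i = 1 - l j := by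
    rw [← hsum, ← Finset.add_sum_erase _ l (Finset.mem_univ j), add_sub_cancel_left]
  rw [← Finset.add_sum_erase _ _ (Finset.mem_univ j), ← hrest]
  gcongr
  exact Finset.sum_sq_le_sq_sum_of_nonneg fun i _ => hl i

theorem sum_sq_le_of_forall_le {ι : Type*} [Fintype ι] {l : ι → ℝ} (hl : ∀ i, 0 ≤ l i)
    (hsum : ∑ i, l i = 1) {m : ℝ} (hm : ∀ i, l i ≤ m) : ∑ i, l i ^ 2 ≤ m := by
  calc ∑ i, l i ^ 2 ≤ ∑ i, l i * m :=
        Finset.sum_le_sum fun i _ => (sq (l i)).trans_le (mul_le_mul_of_nonneg_left (hm i) (hl i))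
    _ = m := by rw [← Finset.sum_mul, hsum, one_mul]

theorem min_one_le_two_mul_sqrt {e s : ℝ} (hes : e ≤ s) (hs : 2 * (e * (1 - e)) ≤ s) :
    min 1 ((1 + √2) * √e) ≤ 2 * √s := by
  rcases le_total (1 / 4) e with he | he
  · refine (min_le_left _ _).trans ?_
    have hhalf : 1 / 2 ≤ √s := Real.le_sqrt_of_sq_le (by linarith)
    linarith
  · refine (min_le_right _ _).trans ?_
    rcases le_total e 0 with he0 | he0
    · simp [Real.sqrt_eq_zero_of_nonpos he0]
    have hsqrt2 : √2 ≤ 3 / 2 := Real.sqrt_le_iff.2 (by norm_num)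
    have hconst : ((1 + √2) / 2) ^ 2 ≤ 3 / 2 := by
      linarith [Real.sq_sqrt (zero_le_two (α := ℝ)), add_sq (1 : ℝ) √2]
    have hsqrt : (1 + √2) / 2 * √e ≤ √s := by
      refine Real.le_sqrt_of_sq_le ?_
      rw [mul_pow, Real.sq_sqrt he0]
      nlinarith
    linarith

variable {n : Type*} [Fintype n] [DecidableEq n] {ρ : Matrix n n ℂ}

theorem IsDensityMatrix.sum_eigenvalues (hρ : IsDensityMatrix ρ) :
    ∑ i, hρ.1.isHermitian.eigenvalues i = 1 := by
  have htrace := hρ.2.symm.trans hρ.1.isHermitian.trace_eq_sum_eigenvalues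
  exact Complex.ofReal_injective (by simpa using htrace.symm)

theorem IsDensityMatrix.one_sub_sum_eigenvalues_sq_le_entropy (hρ : IsDensityMatrix ρ) :
    1 - ∑ i, hρ.1.isHermitian.eigenvalues i ^ 2 ≤ entropy ρ := by
  rw [entropy, dif_pos hρ.1.isHermitian, ← hρ.sum_eigenvalues, ← Finset.sum_sub_distrib,
    ← Finset.sum_neg_distrib]
  refine Finset.sum_le_sum fun i _ => ?_
  rcases (hρ.1.eigenvalues_nonneg i).eq_or_lt with hi | hi
  · simp [← hi]
  · linarith [mul_le_mul_of_nonneg_left (Real.log_le_sub_one_of_pos hi) hi.le]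

theorem IsDensityMatrix.entropy_nonneg (hρ : IsDensityMatrix ρ) : 0 ≤ entropy ρ := by
  have hpurity := Finset.sum_sq_le_sq_sum_of_nonneg fun i (_ : i ∈ Finset.univ) =>
    hρ.1.eigenvalues_nonneg i
  rw [hρ.sum_eigenvalues, one_pow] at hpurity
  exact (sub_nonneg.2 hpurity).trans hρ.one_sub_sum_eigenvalues_sq_le_entropy

theorem trace_mul_pureState_eigenvectorBasis (hρ : ρ.IsHermitian) (j : n) :
    (ρ * pureState (ofLp (hρ.eigenvectorBasis j))).trace = hρ.eigenvalues j := by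
  have heigen : Matrix.toEuclideanCLM (𝕜 := ℂ) ρ (hρ.eigenvectorBasis j) =
      (hρ.eigenvalues j : ℂ) • hρ.eigenvectorBasis j := by
    ext i
    rw [Matrix.ofLp_toEuclideanCLM, hρ.mulVec_eigenvectorBasis]
    rfl
  rw [Matrix.trace_mul_comm, trace_pureState_mul, toLp_ofLp, heigen, inner_smul_right,
    inner_self_eq_norm_sq_to_K, hρ.eigenvectorBasis.norm_eq_one]
  simp

theorem IsDensityMatrix.exists_unit_vector_min_one_le_entropy (hρ : IsDensityMatrix ρ) :
    ∃ (φ : n → ℂ) (e : ℝ), ‖toLp 2 φ‖ = 1 ∧ (ρ * pureState φ).trace = ((1 - e : ℝ) : ℂ) ∧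
      min 1 ((1 + √2) * √e) ≤ 2 * √(entropy ρ) := by
  have hnonneg := hρ.1.eigenvalues_nonneg
  have hsum := hρ.sum_eigenvalues
  have hentropy := hρ.one_sub_sum_eigenvalues_sq_le_entropy
  have : Nonempty n := by
    by_contra! hn
    simp at hsum
  obtain ⟨j, hj⟩ := Finite.exists_max hρ.1.isHermitian.eigenvalues
  refine ⟨ofLp (hρ.1.isHermitian.eigenvectorBasis j), 1 - hρ.1.isHermitian.eigenvalues j,
    hρ.1.isHermitian.eigenvectorBasis.norm_eq_one j, ?_, min_one_le_two_mul_sqrt ?_ ?_⟩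
  · rw [trace_mul_pureState_eigenvectorBasis, sub_sub_cancel]
  · linarith [sum_sq_le_of_forall_le hnonneg hsum hj]
  · linarith [sum_sq_le_sq_add_one_sub_sq hnonneg hsum j]

end Entropy

section Extension

open WithLp Function

theorem sum_ite_eq_off {M : Type*} [AddCommMonoid M] (k : Fin N)
    (x : ∀ j, d j) (g : (∀ j, d j) → M) :
    (∑ y, if ∀ j, j ≠ k → x j = y j then g y else 0) = ∑ a, g (update x k a) := by
  have hfilter : Finset.univ.filter (fun y => ∀ j, j ≠ k → x j = y j) =
      Finset.univ.image (update x k) := by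
    ext y
    simp [update_eq_iff]
  rw [← Finset.sum_filter, hfilter, Finset.sum_image (update_injective x k).injOn]

omit [∀ k, Fintype (d k)] in
theorem extendAt_conjTranspose (k : Fin N) (A : Matrix (d k) (d k) ℂ) :
    extendAt k Aᴴ = (extendAt k A)ᴴ := by
  ext x y
  simp only [extendAt, Matrix.conjTranspose_apply, Matrix.of_apply, apply_ite star, star_zero]
  simp only [eq_comm]

theorem extendAt_mulVec (k : Fin N) (A : Matrix (d k) (d k) ℂ) (w : (∀ j, d j) → ℂ)
    (x : ∀ j, d j) : (extendAt k A *ᵥ w) x = ∑ a, A (x k) a * w (update x k a) := by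
  have hsum := sum_ite_eq_off k x fun y => A (x k) (y k) * w y
  simp only [update_self] at hsum
  rw [← hsum]
  simp only [Matrix.mulVec, dotProduct, extendAt, Matrix.of_apply, ite_mul, zero_mul]

theorem extendAt_mul (k : Fin N) (A B : Matrix (d k) (d k) ℂ) :
    extendAt k (A * B) = extendAt k A * extendAt k B := by
  refine Matrix.ext_of_mulVec_single fun i => ?_
  rw [← Matrix.mulVec_mulVec]
  ext x
  simp only [extendAt_mulVec, update_self, update_idem, Matrix.mul_apply, Finset.sum_mul,
    Finset.mul_sum, mul_assoc]
  exact Finset.sum_comm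

theorem extendAt_commute {k l : Fin N} (hkl : k ≠ l) (A : Matrix (d k) (d k) ℂ)
    (B : Matrix (d l) (d l) ℂ) : Commute (extendAt k A) (extendAt l B) := by
  refine Matrix.ext_of_mulVec_single fun i => ?_
  rw [← Matrix.mulVec_mulVec, ← Matrix.mulVec_mulVec]
  ext x
  simp only [extendAt_mulVec, Finset.mul_sum, update_of_ne hkl, update_of_ne hkl.symm]
  rw [Finset.sum_comm]
  simp only [update_comm hkl, mul_left_comm]

theorem extendAt_algebraMap (k : Fin N) (c : ℂ) :
    extendAt (d := d) k (algebraMap ℂ _ c) = algebraMap ℂ _ c := by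
  refine Matrix.ext_of_mulVec_single fun i => ?_
  ext x
  simp [extendAt_mulVec, Matrix.algebraMap_eq_diagonal, Matrix.diagonal_apply,
    Matrix.mulVec_diagonal]

theorem trace_mul_extendAt (k : Fin N) (ρ : Matrix (∀ j, d j) (∀ j, d j) ℂ)
    (A : Matrix (d k) (d k) ℂ) : (ρ * extendAt k A).trace = (reduce k ρ * A).trace := by
  have hrow : ∀ x : ∀ j, d j, (ρ * extendAt k A) x x =
      ∑ b, ρ x (update x k b) * A b (x k) := by
    intro x
    have hsum := sum_ite_eq_off k x fun y => ρ x y * A (y k) (x k)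
    simp only [update_self] at hsum
    rw [← hsum]
    simp only [Matrix.mul_apply, extendAt, Matrix.of_apply, mul_ite, mul_zero, eq_comm]
  have hentry : ∀ a, (reduce k ρ * A) a a =
      ∑ x : ∀ j, d j, if x k = a then ∑ b, ρ x (update x k b) * A b a else 0 := by
    intro a
    simp only [Matrix.mul_apply, reduce, Matrix.of_apply, Finset.sum_mul, ite_mul, zero_mul]
    rw [Finset.sum_comm]
    exact Finset.sum_congr rfl fun x _ => by split_ifs <;> simp
  calc (ρ * extendAt k A).trace = ∑ x : ∀ j, d j, ∑ b, ρ x (update x k b) * A b (x k) :=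
        Finset.sum_congr rfl fun x _ => hrow x
    _ = ∑ x : ∀ j, d j, ∑ a, if x k = a then ∑ b, ρ x (update x k b) * A b a else 0 := by simp
    _ = ∑ a, ∑ x : ∀ j, d j, if x k = a then ∑ b, ρ x (update x k b) * A b a else 0 :=
        Finset.sum_comm
    _ = (reduce k ρ * A).trace := Finset.sum_congr rfl fun a _ => (hentry a).symm

/-- `extendAt k`, the embedding of the operators on the `k`-th factor into those on the tensor
product, as a homomorphism of star algebras. -/
def extendAtHom (k : Fin N) :
    Matrix (d k) (d k) ℂ →⋆ₐ[ℂ] Matrix (∀ j, d j) (∀ j, d j) ℂ where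
  toFun := extendAt k
  map_one' := by simpa only [map_one] using extendAt_algebraMap (d := d) k 1
  map_mul' := extendAt_mul k
  map_zero' := by simpa only [map_zero] using extendAt_algebraMap (d := d) k 0
  map_add' A B := by
    ext x y
    simp only [extendAt, Matrix.of_apply, Matrix.add_apply]
    split_ifs <;> simp
  commutes' := extendAt_algebraMap k
  map_star' := extendAt_conjTranspose k

/-- The operator on the total Hilbert space given by a matrix acting on the `k`-th factor, as a
homomorphism of star algebras. -/
def siteOperator (k : Fin N) : Matrix (d k) (d k) ℂ →⋆ₐ[ℂ]
    (EuclideanSpace ℂ (∀ j, d j) →L[ℂ] EuclideanSpace ℂ (∀ j, d j)) :=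
  (Matrix.toEuclideanCLM (𝕜 := ℂ) (n := ∀ j, d j) : _ →⋆ₐ[ℂ] _).comp (extendAtHom k)

theorem siteOperator_apply (k : Fin N) (A : Matrix (d k) (d k) ℂ) :
    siteOperator k A = Matrix.toEuclideanCLM (𝕜 := ℂ) (extendAt k A) := rfl

theorem commute_siteOperator {k l : Fin N} (hkl : k ≠ l) (A : Matrix (d k) (d k) ℂ)
    (B : Matrix (d l) (d l) ℂ) : Commute (siteOperator k A) (siteOperator l B) :=
  (extendAt_commute hkl A B).map (Matrix.toEuclideanCLM (𝕜 := ℂ))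

theorem inner_siteOperator (k : Fin N) (A : Matrix (d k) (d k) ℂ) (v : (∀ j, d j) → ℂ) :
    inner ℂ (toLp 2 v) (siteOperator k A (toLp 2 v)) = (reduce k (pureState v) * A).trace := by
  rw [← trace_mul_extendAt, trace_pureState_mul, siteOperator_apply]

theorem norm_siteOperator_sq (k : Fin N) (A : Matrix (d k) (d k) ℂ)
    (w : EuclideanSpace ℂ (∀ j, d j)) :
    ‖siteOperator k A w‖ ^ 2 = secondMoment (reduce k (pureState (ofLp w))) A := by
  rw [secondMoment, ← trace_mul_extendAt, siteOperator_apply, extendAt_mul,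
    extendAt_conjTranspose]
  exact (secondMoment_pureState (ofLp w) (extendAt k A)).symm

open scoped MatrixOrder in
theorem trace_reduce_mul_nonneg (k : Fin N) {ρ : Matrix (∀ j, d j) (∀ j, d j) ℂ}
    (hρ : ρ.PosSemidef) {A : Matrix (d k) (d k) ℂ} (hA : A.PosSemidef) :
    0 ≤ (reduce k ρ * A).trace := by
  obtain ⟨B, rfl⟩ := CStarAlgebra.nonneg_iff_eq_star_mul_self.1 hA.nonneg
  rw [← trace_mul_extendAt, Matrix.star_eq_conjTranspose, extendAt_mul, extendAt_conjTranspose,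
    ← mul_assoc, Matrix.trace_mul_comm, ← mul_assoc]
  exact (hρ.mul_mul_conjTranspose_same (extendAt k B)).trace_nonneg

theorem posSemidef_reduce (k : Fin N) {ρ : Matrix (∀ j, d j) (∀ j, d j) ℂ} (hρ : ρ.PosSemidef) :
    (reduce k ρ).PosSemidef := by
  rw [← Matrix.isPositive_toEuclideanLin_iff, LinearMap.isPositive_iff_complex]
  intro v
  have hv : 0 ≤ inner ℂ v (Matrix.toEuclideanLin (reduce k ρ) v) := by
    have htrace := trace_reduce_mul_nonneg k hρ (posSemidef_pureState (ofLp v))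
    rwa [Matrix.trace_mul_comm, trace_pureState_mul] at htrace
  rw [← inner_conj_symm, RCLike.conj_eq_iff_im.2 (Complex.nonneg_iff.1 hv).2.symm]
  obtain ⟨hre, him⟩ := Complex.nonneg_iff.1 hv
  exact ⟨Complex.ext rfl him, hre⟩

theorem isDensityMatrix_reduce (k : Fin N) {ρ : Matrix (∀ j, d j) (∀ j, d j) ℂ}
    (hρ : IsDensityMatrix ρ) : IsDensityMatrix (reduce k ρ) := by
  refine ⟨posSemidef_reduce k hρ.1, ?_⟩
  have htrace := trace_mul_extendAt k ρ 1
  rwa [show extendAt k 1 = 1 from map_one (extendAtHom k), mul_one, mul_one, hρ.2,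
    eq_comm] at htrace

theorem secondMomentLE_siteOperator (k : Fin N) {F : Type*} [Fintype F]
    {T : F → Matrix (d k) (d k) ℂ} {σ : Matrix (d k) (d k) ℂ} (hσ : IsDensityMatrix σ)
    (hmax : IsMaxOn (fun ρ => ∑ f, variance ρ (T f)) {ρ | IsDensityMatrix ρ} σ) :
    SecondMomentLE (fun f => siteOperator k (T f - (σ * T f).trace • 1))
      (∑ f, variance σ (T f)) := by
  refine .of_forall_norm_eq_one fun w hw => ?_
  simp only [norm_siteOperator_sq]
  exact sum_secondMoment_sub_le_of_isMaxOn hmax hσ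
    (isDensityMatrix_reduce k (isDensityMatrix_pureState hw))

end Extension

section Covariance

open WithLp

variable {F : Type*} [Fintype F] {t : (∀ j, d j) → ℂ}

theorem norm_inner_totalDeviation_siteOperator_le {k l : Fin N} (hkl : k ≠ l)
    (ht : ‖toLp 2 t‖ = 1) {X : F → Matrix (d k) (d k) ℂ} {D : F → Matrix (d l) (d l) ℂ} {P R : ℝ}
    (hX : SecondMomentLE (fun f => siteOperator k (X f)) P)
    (hD : SecondMomentLE (fun f => siteOperator l (D f)) R) :
    ‖inner ℂ (totalDeviation (fun f => siteOperator k (X f)) (toLp 2 t))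
        (totalDeviation (fun f => siteOperator l (D f)) (toLp 2 t))‖ ≤
      √P * √R * (2 * √(entropy (reduce l (pureState t)))) := by
  obtain ⟨φ, e, hφ, htrace, hentropy⟩ :=
    (isDensityMatrix_reduce l (isDensityMatrix_pureState ht)).exists_unit_vector_min_one_le_entropy
  set Q := siteOperator l (pureState φ)
  have hQ : IsStarProjection Q := (isStarProjection_pureState hφ).map (siteOperator l)
  have hdist : ‖toLp 2 t - Q (toLp 2 t)‖ = √e := by
    rw [← Real.sqrt_sq (norm_nonneg _), norm_sub_apply_sq_of_isStarProjection hQ, ht,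
      inner_siteOperator, htrace]
    simp
  have hcompress : ∀ f, Q * siteOperator l (D f) * Q = (pureState φ * D f).trace • Q := fun f => by
    rw [← map_mul, ← map_mul, pureState_mul_mul_pureState, map_smul]
  refine (norm_inner_totalDeviation_le ht hX hD hQ
    (fun f => commute_siteOperator hkl.symm (pureState φ) (X f))
    fun f => ⟨_, hcompress f⟩).trans ?_
  rw [hdist]
  gcongr

theorem norm_inner_totalDeviation_siteOperator_le_add {k l : Fin N} (hkl : k ≠ l)
    (ht : ‖toLp 2 t‖ = 1) {X : F → Matrix (d k) (d k) ℂ} {D : F → Matrix (d l) (d l) ℂ} {P R : ℝ}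
    (hX : SecondMomentLE (fun f => siteOperator k (X f)) P)
    (hD : SecondMomentLE (fun f => siteOperator l (D f)) R) :
    ‖inner ℂ (totalDeviation (fun f => siteOperator k (X f)) (toLp 2 t))
        (totalDeviation (fun f => siteOperator l (D f)) (toLp 2 t))‖ ≤
      P * √(entropy (reduce l (pureState t))) + R * √(entropy (reduce k (pureState t))) := by
  have ht0 : toLp 2 t ≠ 0 := norm_ne_zero_iff.1 (ht.trans_ne one_ne_zero)
  have hP := hX.nonneg ht0
  have hR := hD.nonneg ht0
  have hcov := norm_inner_totalDeviation_siteOperator_le hkl ht hX hD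
  have hcov' := norm_inner_totalDeviation_siteOperator_le hkl.symm ht hD hX
  rw [norm_inner_symm] at hcov'
  set a := √(entropy (reduce l (pureState t)))
  set b := √(entropy (reduce k (pureState t)))
  have hmin : 0 ≤ min a b := le_min (Real.sqrt_nonneg _) (Real.sqrt_nonneg _)
  calc _ ≤ 2 * √P * √R * min a b := by
        rcases min_choice a b with h | h <;> rw [h] <;> linarith
    _ ≤ (√P ^ 2 + √R ^ 2) * min a b :=
        mul_le_mul_of_nonneg_right (two_mul_le_add_sq √P √R) hmin
    _ = P * min a b + R * min a b := by rw [Real.sq_sqrt hP, Real.sq_sqrt hR, add_mul]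
    _ ≤ P * a + R * b := by gcongr <;> simp

theorem sum_variance_sum_extendAt_le (ht : ‖toLp 2 t‖ = 1) (T : F → ∀ k, Matrix (d k) (d k) ℂ)
    (c : F → Fin N → ℂ) {P : Fin N → ℝ}
    (hT : ∀ k, SecondMomentLE (fun f => siteOperator k (T f k - c f k • 1)) (P k)) :
    ∑ f, variance (pureState t) (∑ k, extendAt k (T f k)) ≤
      (∑ k, P k) * (1 + 2 * ∑ k, √(entropy (reduce k (pureState t)))) := by
  set y := fun k => totalDeviation (fun f => siteOperator k (T f k)) (toLp 2 t)
  have hcentre : ∀ k, y k =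
      totalDeviation (fun f => siteOperator k (T f k - c f k • 1)) (toLp 2 t) := fun k => by
    simp only [map_sub, map_smul, map_one, totalDeviation_sub_smul_one, y]
  have hvar : ∑ f, variance (pureState t) (∑ k, extendAt k (T f k)) = ‖∑ k, y k‖ ^ 2 := by
    rw [← totalDeviation_sum, norm_totalDeviation_sq]
    simp only [variance_pureState ht, map_sum, siteOperator_apply]
  rw [hvar]
  refine norm_sum_sq_le_of_norm_inner_le (𝕜 := ℂ) (fun k => Real.sqrt_nonneg _) (fun k => ?_)
    fun k l hkl => ?_
  · have hP := (hT k).nonneg (norm_ne_zero_iff.1 (ht.trans_ne one_ne_zero))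
    rw [hcentre]
    exact (Real.le_sqrt (norm_nonneg _) hP).1 ((hT k).norm_totalDeviation_le hP ht.le)
  · simp only [hcentre]
    exact norm_inner_totalDeviation_siteOperator_le_add hkl ht (hT k) (hT l)

end Covariance

theorem sum_sqrt_le_card_mul_sqrt {ι : Type*} [Fintype ι] {s : ι → ℝ} (hs : ∀ i, 0 ≤ s i) :
    ∑ i, √(s i) ≤ Fintype.card ι * √((1 / (Fintype.card ι : ℝ)) * ∑ i, s i) := by
  have hsq : (∑ i, √(s i)) ^ 2 ≤ Fintype.card ι * ∑ i, s i := by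
    simpa only [Real.sq_sqrt (hs _), Finset.card_univ] using
      sq_sum_le_card_mul_sum_sq (s := Finset.univ) (f := fun i => √(s i))
  have hcard : (Fintype.card ι : ℝ) ^ 2 * (1 / (Fintype.card ι : ℝ)) = Fintype.card ι := by
    rw [sq, mul_one_div, mul_self_div_self]
  rw [← Real.sqrt_sq (Nat.cast_nonneg (α := ℝ) (Fintype.card ι)), ← Real.sqrt_mul (sq_nonneg _),
    Real.sqrt_sq (Nat.cast_nonneg _), ← mul_assoc, hcard]
  exact Real.le_sqrt_of_sq_le hsq

/-- Lemma 4a of the paper. For a finite index set `F` of outgoing states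
and operators `T_k^{i→f}` on `H_k` with `T^{i→f} = Σ_k (extension of T_k^{i→f} to H)`,
a unit vector `|t⟩` in `H`, and `P_k` the maximum over density matrices `σ` on `H_k` of
`Σ_f Var_σ(T_k^{i→f})`, one has
`Σ_f Var_{|t⟩}(T^{i→f}) ≤ ((1/N)·Σ_k P_k) · (N + 2N²·√((1/N)·Σ_k s_k))`. -/
theorem orthogonal_scattering_prob_bound
    [∀ k, Nonempty (d k)] (hN : 1 ≤ N)
    {F : Type*} [Fintype F] (T : F → ∀ k, Matrix (d k) (d k) ℂ)
    (t : (∀ j, d j) → ℂ) (ht : ∑ x, Complex.normSq (t x) = 1)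
    (P : Fin N → ℝ)
    (hP : ∀ k, IsGreatest
      {x : ℝ | ∃ σ : Matrix (d k) (d k) ℂ, IsDensityMatrix σ ∧ x = ∑ f, variance σ (T f k)}
      (P k)) :
    ∑ f, variance (pureState t) (∑ k, extendAt k (T f k)) ≤
      ((1 / (N : ℝ)) * ∑ k, P k) *
        ((N : ℝ) + 2 * (N : ℝ) ^ 2 *
          Real.sqrt ((1 / (N : ℝ)) * ∑ k, entropy (reduce k (pureState t)))) := by
  have ht1 : ‖WithLp.toLp 2 t‖ = 1 := by
    rw [← sq_eq_sq₀ (norm_nonneg _) zero_le_one, EuclideanSpace.norm_sq_eq, one_pow, ← ht]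
    simp only [Complex.normSq_eq_norm_sq]
  choose σ hσ hPσ using fun k => (hP k).1
  have hmax : ∀ k, IsMaxOn (fun ρ => ∑ f, variance ρ (T f k)) {ρ | IsDensityMatrix ρ} (σ k) :=
    fun k ρ hρ => (hP k).2 ⟨ρ, hρ, rfl⟩ |>.trans_eq (hPσ k)
  have hT : ∀ k, SecondMomentLE
      (fun f => siteOperator k (T f k - (σ k * T f k).trace • 1)) (P k) :=
    fun k => hPσ k ▸ secondMomentLE_siteOperator k (hσ k) (hmax k)
  have hP0 : 0 ≤ ∑ k, P k := Finset.sum_nonneg fun k _ =>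
    (hT k).nonneg (norm_ne_zero_iff.1 (ht1.trans_ne one_ne_zero))
  have hN0 : (N : ℝ) ≠ 0 := Nat.cast_ne_zero.2 (Nat.one_le_iff_ne_zero.1 hN)
  calc ∑ f, variance (pureState t) (∑ k, extendAt k (T f k))
      ≤ (∑ k, P k) * (1 + 2 * ∑ k, √(entropy (reduce k (pureState t)))) :=
        sum_variance_sum_extendAt_le ht1 T (fun f k => (σ k * T f k).trace) hT
    _ ≤ (∑ k, P k) *
          (1 + 2 * (N * √((1 / (N : ℝ)) * ∑ k, entropy (reduce k (pureState t))))) := by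
        gcongr
        simpa only [Fintype.card_fin] using sum_sqrt_le_card_mul_sqrt fun k =>
          (isDensityMatrix_reduce k (isDensityMatrix_pureState ht1)).entropy_nonneg
    _ = _ := by field_simp

end Paper
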